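/- Let p be a prime number. In ℤ[u]: (a) for all a ≥ 1 and 0 ≤ i ≤ pa with p ∤ i, the q-integer (p)_u divides the Gaussian binomial coefficient C(pa, i)_u; (b) for all 0 ≤ b ≤ a, C(pa, pb)_u ≡ binom(a,b) (mod (p)_u·ℤ[u]), where binom(a,b) ∈ ℤ is the ordinary binomial coefficient (the q-Lucas congruences modulo (p)_u). -/

import Mathlib

/-!
The `q`-Vandermonde identity `gbinom_add` expands `C(m+p, k)` as a sum of products
`u^{i(p-j)} C(m, i) C(p, j)` over `i + j = k`. Modulo `(p)_u` the factor `C(p, j)` vanishes for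
`0 < j < p`: by absorption `(j)_u C(p, j) = (p)_u C(p-1, j-1)`, and `(j)_u` is coprime to `(p)_u`.
Since moreover `u^p ≡ 1`, what remains is the Pascal-type recurrence
`C(m+p, k) ≡ C(m, k) + C(m, k-p)` (`redMap_gbinom_add_of_lt`, `redMap_gbinom_add_add`).
Hence the rows `pa` reduce to the coefficients of `(1 + T^p)^a`, and both claims follow by
induction on `a`.
-/

/-- The `q`-integer `(n)_q = 1 + q + ⋯ + q^{n-1}`. -/
def qInt {S : Type*} [CommRing S] (q : S) (n : ℕ) : S :=
  ∑ i ∈ Finset.range n, q ^ i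

/-- The Gaussian binomial coefficient `C(n,k)_u ∈ ℤ[u]`. -/
noncomputable def gbinom : ℕ → ℕ → Polynomial ℤ
  | _, 0 => 1
  | 0, _ + 1 => 0
  | n + 1, k + 1 => Polynomial.X ^ (k + 1) * gbinom n (k + 1) + gbinom n k
  termination_by n _ => n

open Polynomial Finset

lemma gbinom_zero_right (n : ℕ) : gbinom n 0 = 1 := by
  simp [gbinom]

lemma gbinom_zero_succ (k : ℕ) : gbinom 0 (k + 1) = 0 := by
  simp [gbinom]

lemma gbinom_succ_succ (n k : ℕ) :
    gbinom (n + 1) (k + 1) = X ^ (k + 1) * gbinom n (k + 1) + gbinom n k := by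
  rw [gbinom]

lemma gbinom_eq_zero_of_lt {n k : ℕ} (h : n < k) : gbinom n k = 0 := by
  induction n generalizing k with
  | zero =>
    obtain ⟨k, rfl⟩ := Nat.exists_eq_succ_of_ne_zero (by omega : k ≠ 0)
    exact gbinom_zero_succ k
  | succ n ih =>
    obtain ⟨k, rfl⟩ := Nat.exists_eq_succ_of_ne_zero (by omega : k ≠ 0)
    rw [Nat.succ_eq_add_one, gbinom_succ_succ, ih (by omega), ih (by omega)]
    simp

lemma gbinom_self (n : ℕ) : gbinom n n = 1 := by
  induction n with
  | zero => exact gbinom_zero_right 0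
  | succ n ih => rw [gbinom_succ_succ, ih, gbinom_eq_zero_of_lt (by omega)]; simp

lemma qInt_add {S : Type*} [CommRing S] (q : S) (m n : ℕ) :
    qInt q (m + n) = qInt q m + q ^ m * qInt q n := by
  simp [qInt, Finset.sum_range_add, pow_add, Finset.mul_sum]

lemma qInt_one {S : Type*} [CommRing S] (q : S) : qInt q 1 = 1 := by
  simp [qInt]

lemma qInt_succ {S : Type*} [CommRing S] (q : S) (n : ℕ) :
    qInt q (n + 1) = 1 + q * qInt q n := by
  rw [add_comm, qInt_add, qInt_one, pow_one]

lemma qInt_dvd_qInt_mul {S : Type*} [CommRing S] (q : S) (m c : ℕ) :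
    qInt q m ∣ qInt q (m * c) := by
  induction c with
  | zero => simp [qInt]
  | succ c ih =>
    rw [Nat.mul_succ, qInt_add]
    exact dvd_add ih (Dvd.intro_left _ rfl)

/-- If `jc = 1 + pd`, then `(jc)_q = 1 + q (pd)_q`, which is a Bézout relation between
`(j)_q ∣ (jc)_q` and `(p)_q ∣ (pd)_q`. -/
lemma isCoprime_qInt {S : Type*} [CommRing S] (q : S) {p j : ℕ} (hp : p.Prime)
    (h0 : 0 < j) (hj : j < p) : IsCoprime (qInt q p) (qInt q j) := by
  have hco : Nat.Coprime j p := (Nat.coprime_of_lt_prime h0.ne' hj hp).symm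
  obtain ⟨c, -, hc⟩ := Nat.exists_mul_mod_eq_one_of_coprime hco hp.one_lt
  have hjc : j * c = p * (j * c / p) + 1 := by
    have := Nat.div_add_mod (j * c) p
    omega
  obtain ⟨x, hx⟩ := qInt_dvd_qInt_mul q j c
  obtain ⟨y, hy⟩ := qInt_dvd_qInt_mul q p (j * c / p)
  rw [hjc, qInt_succ, hy] at hx
  exact ⟨-(q * y), x, by linear_combination -hx⟩

/-- The absorption identity `(k+1)_u C(n+1, k+1) = (n+1)_u C(n, k)`. -/
lemma qInt_mul_gbinom (n k : ℕ) :
    qInt (X : ℤ[X]) (k + 1) * gbinom (n + 1) (k + 1) = qInt X (n + 1) * gbinom n k := by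
  induction n generalizing k with
  | zero =>
    cases k with
    | zero => rw [gbinom_self, gbinom_self]
    | succ k => rw [gbinom_eq_zero_of_lt (by omega), gbinom_zero_succ, mul_zero, mul_zero]
  | succ n ih =>
    cases k with
    | zero =>
      have h := ih 0
      rw [gbinom_succ_succ, qInt_succ X (n + 1)]
      simp only [zero_add, qInt_one, gbinom_zero_right, pow_one] at h ⊢
      linear_combination X * h
    | succ k =>
      have h1 := ih (k + 1)
      have h2 := ih k
      rw [gbinom_succ_succ (n + 1), qInt_succ X (n + 1)]
      linear_combination X ^ (k + 1 + 1) * h1 + X * h2 +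
        gbinom (n + 1) (k + 1) * qInt_succ (X : ℤ[X]) (k + 1) -
        X * qInt X (n + 1) * gbinom_succ_succ n k

/-- The `q`-Vandermonde identity. The truncated subtraction `n - j` is harmless, because
`C(n, j) = 0` when `j > n`. -/
lemma gbinom_add (m n k : ℕ) :
    gbinom (m + n) k =
      ∑ ij ∈ antidiagonal k, X ^ (ij.1 * (n - ij.2)) * gbinom m ij.1 * gbinom n ij.2 := by
  induction n generalizing k with
  | zero =>
    rw [Finset.sum_eq_single (k, 0)]
    · simp [gbinom_zero_right]
    · rintro ⟨i, j⟩ hij hne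
      rw [HasAntidiagonal.mem_antidiagonal] at hij
      have hj : 0 < j := by
        rcases Nat.eq_zero_or_pos j with rfl | h
        · exact absurd (by simpa using hij) (fun h : i = k => hne (by rw [h]))
        · exact h
      simp [gbinom_eq_zero_of_lt hj]
    · simp
  | succ n ih =>
    cases k with
    | zero => simp [gbinom_zero_right]
    | succ k =>
      rw [← add_assoc, gbinom_succ_succ, ih (k + 1), ih k,
        Finset.Nat.antidiagonal_succ', Finset.sum_cons, Finset.sum_cons, Finset.sum_map,
        Finset.sum_map, mul_add, Finset.mul_sum, add_assoc, ← Finset.sum_add_distrib]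
      congr 1
      · simp only [gbinom_zero_right, Nat.sub_zero]
        ring
      · refine Finset.sum_congr rfl fun ij hij => ?_
        obtain ⟨i, j⟩ := ij
        rw [HasAntidiagonal.mem_antidiagonal] at hij
        simp only [Function.Embedding.prodMap, Function.Embedding.coeFn_mk, Prod.map,
          Function.Embedding.refl_apply, Nat.succ_eq_add_one, Nat.add_sub_add_right] at hij ⊢
        rw [gbinom_succ_succ]
        rcases Nat.lt_or_ge n (j + 1) with h | h
        · rw [gbinom_eq_zero_of_lt h]
          ring
        · obtain ⟨d, rfl⟩ := Nat.exists_eq_add_of_le h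
          have e1 : j + 1 + d - (j + 1) = d := by omega
          have e2 : j + 1 + d - j = d + 1 := by omega
          rw [e1, e2, ← hij]
          ring

/-- The reduction map `ℤ[u] → ℤ[u]/(p)_u`. -/
noncomputable abbrev redMap (p : ℕ) : ℤ[X] →+* ℤ[X] ⧸ Ideal.span {qInt (X : ℤ[X]) p} :=
  Ideal.Quotient.mk _

lemma redMap_eq_zero_iff (p : ℕ) (f : ℤ[X]) : redMap p f = 0 ↔ qInt (X : ℤ[X]) p ∣ f := by
  rw [Ideal.Quotient.eq_zero_iff_mem, Ideal.mem_span_singleton]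

lemma redMap_X_pow (p : ℕ) : redMap p X ^ p = 1 := by
  rw [← map_pow, ← sub_eq_zero, ← map_one (redMap p), ← map_sub, redMap_eq_zero_iff]
  exact ⟨X - 1, (geom_sum_mul X p).symm⟩

lemma redMap_gbinom_prime {p j : ℕ} (hp : p.Prime) (h0 : 0 < j) (hj : j ≠ p) :
    redMap p (gbinom p j) = 0 := by
  rcases lt_or_gt_of_ne hj with h | h
  · rw [redMap_eq_zero_iff]
    refine (isCoprime_qInt X hp h0 h).dvd_of_dvd_mul_left ?_
    obtain ⟨j, rfl⟩ := Nat.exists_eq_succ_of_ne_zero h0.ne'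
    obtain ⟨n, rfl⟩ := Nat.exists_eq_succ_of_ne_zero hp.ne_zero
    exact ⟨_, qInt_mul_gbinom n j⟩
  · rw [gbinom_eq_zero_of_lt h, map_zero]

lemma redMap_gbinom_add_of_lt {p : ℕ} (hp : p.Prime) (m : ℕ) {k : ℕ} (hk : k < p) :
    redMap p (gbinom (m + p) k) = redMap p (gbinom m k) := by
  rw [gbinom_add, map_sum, Finset.sum_eq_single (k, 0)]
  · simp [gbinom_zero_right, mul_comm k p, pow_mul, redMap_X_pow]
  · rintro ⟨i, j⟩ hij hne
    rw [HasAntidiagonal.mem_antidiagonal] at hij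
    have hj : 0 < j := by
      by_contra h
      exact hne (Prod.ext (by simp at hij ⊢; omega) (by simp at hij ⊢; omega))
    rw [map_mul, redMap_gbinom_prime hp hj (by simp at hij; omega), mul_zero]
  · simp

lemma redMap_gbinom_add_add {p : ℕ} (hp : p.Prime) (m k : ℕ) :
    redMap p (gbinom (m + p) (k + p)) =
      redMap p (gbinom m (k + p)) + redMap p (gbinom m k) := by
  have hp0 := hp.pos
  rw [gbinom_add, map_sum, Finset.sum_eq_add (k + p, 0) (k, p)]
  · simp [gbinom_zero_right, gbinom_self, mul_comm (k + p) p, pow_mul, redMap_X_pow]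
  · intro h
    have := congrArg Prod.snd h
    simp at this
    omega
  · rintro ⟨i, j⟩ hij ⟨hne1, hne2⟩
    simp only [HasAntidiagonal.mem_antidiagonal, ne_eq, Prod.mk.injEq] at hij hne1 hne2
    rw [map_mul, redMap_gbinom_prime hp (by omega) (by omega), mul_zero]
  · simp
  · simp

lemma redMap_gbinom_mul_of_not_dvd {p : ℕ} (hp : p.Prime) (a i : ℕ) (hi : ¬ p ∣ i) :
    redMap p (gbinom (p * a) i) = 0 := by
  induction a generalizing i with
  | zero =>
    have : 0 < i := Nat.pos_of_ne_zero fun h => hi (h ▸ dvd_zero p)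
    rw [mul_zero, gbinom_eq_zero_of_lt this, map_zero]
  | succ a ih =>
    rw [Nat.mul_succ]
    rcases Nat.lt_or_ge i p with h | h
    · rw [redMap_gbinom_add_of_lt hp _ h, ih i hi]
    · obtain ⟨k, rfl⟩ := Nat.exists_eq_add_of_le' h
      rw [redMap_gbinom_add_add hp, ih _ hi, ih k (by simpa using hi), add_zero]

lemma redMap_gbinom_mul_mul {p : ℕ} (hp : p.Prime) (a b : ℕ) :
    redMap p (gbinom (p * a) (p * b)) = (a.choose b : ℤ[X] ⧸ Ideal.span {qInt (X : ℤ[X]) p}) := by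
  induction a generalizing b with
  | zero =>
    cases b with
    | zero => simp [gbinom_zero_right]
    | succ b =>
      rw [mul_zero, gbinom_eq_zero_of_lt (Nat.mul_pos hp.pos b.succ_pos)]
      simp
  | succ a ih =>
    cases b with
    | zero => simp [gbinom_zero_right]
    | succ b =>
      rw [Nat.mul_succ, Nat.mul_succ, redMap_gbinom_add_add hp, ← Nat.mul_succ, ih, ih,
        Nat.choose_succ_succ]
      push_cast
      ring

/-- q-Lucas congruences modulo `(p)_u`: for `p` prime, in `ℤ[u]`:
(a) for all `a ≥ 1` and `0 ≤ i ≤ pa` with `p ∤ i`, the `q`-integer `(p)_u` divides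
`C(pa, i)_u`;
(b) for all `0 ≤ b ≤ a`, `C(pa, pb)_u ≡ binom(a,b) (mod (p)_u·ℤ[u])`. -/
theorem q_lucas_congruences (p : ℕ) (hp : p.Prime) :
    (∀ a : ℕ, 1 ≤ a → ∀ i ≤ p * a, ¬ p ∣ i →
      qInt (Polynomial.X : Polynomial ℤ) p ∣ gbinom (p * a) i) ∧
    (∀ a b : ℕ, b ≤ a →
      qInt (Polynomial.X : Polynomial ℤ) p ∣
        (gbinom (p * a) (p * b) - (a.choose b : Polynomial ℤ))) := by
  refine ⟨fun a _ i _ hi => ?_, fun a b _ => ?_⟩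
  · exact (redMap_eq_zero_iff p _).1 (redMap_gbinom_mul_of_not_dvd hp a i hi)
  · rw [← redMap_eq_zero_iff, map_sub, redMap_gbinom_mul_mul hp, map_natCast, sub_self]
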